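/- Let α₀, β₀, z ∈ ℝ and let δ_z be the 3×3 real matrix with rows (1,0,0), (z,1,0), (z²/2, z, 1). Then δ_zᵀ B(α₀,β₀) δ_z = B(α₀,β₀). Consequently, for every integer k ≥ 1, the 3(k+1)×3(k+1) block-diagonal matrix ℒ = blockdiag(δ_z, …, δ_z) (k+1 blocks) is invertible and satisfies ℒᵀ B ℒ = B, where B = blockdiag(B(α₀,β₀), …, B(α₀,β₀)) (k+1 blocks); that is, ℒ is bijective and ⟨Bℒx, ℒy⟩ = ⟨Bx, y⟩ for all x, y ∈ ℂ^{3(k+1)}. -/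

import Mathlib

open Matrix

/-- The standard Hermitian inner product on `ℂ^n`, conjugate-linear in the
second argument. -/
noncomputable def herm {n : Type*} [Fintype n] (x y : n → ℂ) : ℂ :=
  ∑ i, x i * (starRingEnd ℂ) (y i)

/-- `B(α,β)`: the 3×3 matrix with rows `(β,0,α)`, `(0,−α,0)`, `(α,0,0)`, viewed over `ℂ`. -/
noncomputable def Bmat (a b : ℝ) : Matrix (Fin 3) (Fin 3) ℂ :=
  !![(b : ℂ), 0, (a : ℂ); 0, -(a : ℂ), 0; (a : ℂ), 0, 0]

/-- `δ_z`: the 3×3 matrix with rows `(1,0,0)`, `(z,1,0)`, `(z²/2,z,1)`, viewed over `ℂ`. -/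
noncomputable def deltaz (z : ℝ) : Matrix (Fin 3) (Fin 3) ℂ :=
  !![1, 0, 0; (z : ℂ), 1, 0; (z : ℂ) ^ 2 / 2, (z : ℂ), 1]

/-!
The matrices `δ_z` form a one-parameter group, `δ_z δ_w = δ_{z+w}`: they are `exp (z N)` for the
nilpotent lower shift `N`. Since `B N` is skew-symmetric and `B` is symmetric, `Nᵀ B = -B N`, which
integrates to `δ_zᵀ B = B δ_{-z}`. Hence `δ_zᵀ B δ_z = B δ_{-z} δ_z = B`. As `δ_z` is real, its
transpose is its adjoint, so preserving the matrix `B` is the same as preserving the Hermitian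
pairing `⟨B x, y⟩`; all of this is inherited blockwise by block-diagonal matrices.
-/

lemma herm_eq_dotProduct_star {n : Type*} [Fintype n] (x y : n → ℂ) : herm x y = x ⬝ᵥ star y :=
  rfl

lemma herm_mulVec_right {m n : Type*} [Fintype m] [Fintype n] (A : Matrix m n ℂ)
    (x : m → ℂ) (y : n → ℂ) : herm x (A *ᵥ y) = herm (Aᴴ *ᵥ x) y := by
  rw [herm_eq_dotProduct_star, herm_eq_dotProduct_star, star_mulVec, dotProduct_comm,
    ← dotProduct_mulVec, dotProduct_comm]

lemma herm_mulVec_mulVec_mulVec {m n : Type*} [Fintype m] [Fintype n] (A : Matrix m n ℂ)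
    (M : Matrix m m ℂ) (x y : n → ℂ) :
    herm (M *ᵥ (A *ᵥ x)) (A *ᵥ y) = herm ((Aᴴ * M * A) *ᵥ x) y := by
  rw [herm_mulVec_right, mulVec_mulVec, mulVec_mulVec, Matrix.mul_assoc]

lemma bijective_mulVec_of_isUnit {n R : Type*} [Fintype n] [DecidableEq n] [CommRing R]
    {A : Matrix n n R} (hA : IsUnit A) : Function.Bijective A.mulVec :=
  ⟨mulVec_injective_of_isUnit hA, mulVec_surjective_iff_isUnit.2 hA⟩

lemma isUnit_blockDiagonal {m o R : Type*} [Fintype m] [DecidableEq m] [Fintype o]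
    [DecidableEq o] [Semiring R] {A : o → Matrix m m R} (hA : ∀ i, IsUnit (A i)) :
    IsUnit (blockDiagonal A) :=
  (Pi.isUnit_iff.2 hA).map (blockDiagonalRingHom m o R)

lemma transpose_blockDiagonal_mul_mul {m n o R : Type*} [Fintype m] [Fintype o]
    [DecidableEq o] [NonUnitalNonAssocSemiring R] (A : o → Matrix m n R) (M : o → Matrix m m R) :
    (blockDiagonal A)ᵀ * blockDiagonal M * blockDiagonal A =
      blockDiagonal fun i => (A i)ᵀ * M i * A i := by
  rw [blockDiagonal_transpose, ← blockDiagonal_mul, ← blockDiagonal_mul]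

lemma deltaz_zero : deltaz 0 = 1 := by
  ext i j
  fin_cases i <;> fin_cases j <;> simp [deltaz]

lemma deltaz_mul (z w : ℝ) : deltaz z * deltaz w = deltaz (z + w) := by
  ext i j
  fin_cases i <;> fin_cases j <;> simp [deltaz, mul_apply, Fin.sum_univ_three]
  ring

lemma deltaz_neg_mul_self (z : ℝ) : deltaz (-z) * deltaz z = 1 := by
  rw [deltaz_mul, neg_add_cancel, deltaz_zero]

lemma isUnit_deltaz (z : ℝ) : IsUnit (deltaz z) :=
  .of_mul_eq_one_right _ (deltaz_neg_mul_self z)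

lemma conjTranspose_deltaz (z : ℝ) : (deltaz z)ᴴ = (deltaz z)ᵀ := by
  ext i j
  fin_cases i <;> fin_cases j <;> simp [deltaz]

lemma transpose_deltaz_mul_Bmat (a b z : ℝ) :
    (deltaz z)ᵀ * Bmat a b = Bmat a b * deltaz (-z) := by
  ext i j
  fin_cases i <;> fin_cases j <;> simp [deltaz, Bmat, mul_apply, Fin.sum_univ_three] <;> ring

lemma transpose_deltaz_mul_Bmat_mul_deltaz (a b z : ℝ) :
    (deltaz z)ᵀ * Bmat a b * deltaz z = Bmat a b := by
  rw [transpose_deltaz_mul_Bmat, Matrix.mul_assoc, deltaz_neg_mul_self, Matrix.mul_one]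

theorem deltaz_unitary_general {o : Type*} [Fintype o] [DecidableEq o] (a b z : o → ℝ)
    {ℒ B : Matrix (Fin 3 × o) (Fin 3 × o) ℂ} (hℒ : ℒ = blockDiagonal fun i => deltaz (z i))
    (hB : B = blockDiagonal fun i => Bmat (a i) (b i)) :
    IsUnit ℒ ∧ ℒᵀ * B * ℒ = B ∧ Function.Bijective ℒ.mulVec ∧
      ∀ x y : Fin 3 × o → ℂ, herm (B *ᵥ (ℒ *ᵥ x)) (ℒ *ᵥ y) = herm (B *ᵥ x) y := by
  have isUnit_ℒ : IsUnit ℒ := hℒ ▸ isUnit_blockDiagonal fun i => isUnit_deltaz (z i)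
  have ℒ_preserves_B : ℒᵀ * B * ℒ = B := by
    simp only [hℒ, hB, transpose_blockDiagonal_mul_mul, transpose_deltaz_mul_Bmat_mul_deltaz]
  have ℒ_real : ℒᴴ = ℒᵀ := by
    simp only [hℒ, blockDiagonal_conjTranspose, blockDiagonal_transpose, conjTranspose_deltaz]
  refine ⟨isUnit_ℒ, ℒ_preserves_B, bijective_mulVec_of_isUnit isUnit_ℒ, fun x y => ?_⟩
  rw [herm_mulVec_mulVec_mulVec, ℒ_real, ℒ_preserves_B]

/-- Example 4.8 (δ-type interactions on a looping-edge graph with `2k` half-lines):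
`δ_zᵀ B(α₀,β₀) δ_z = B(α₀,β₀)`, and consequently, for every `k ≥ 1`, the block-diagonal
matrix `ℒ = blockdiag(δ_z, …, δ_z)` (`k+1` blocks) is invertible and `(B,B)`-unitary,
where `B = blockdiag(B(α₀,β₀), …, B(α₀,β₀))`. -/
theorem deltaz_unitary (a b z : ℝ) :
    (deltaz z)ᵀ * Bmat a b * deltaz z = Bmat a b ∧
    ∀ k : ℕ, 1 ≤ k →
      ∀ ℒ B : Matrix (Fin 3 × Fin (k + 1)) (Fin 3 × Fin (k + 1)) ℂ,
        ℒ = Matrix.blockDiagonal (fun _ : Fin (k + 1) => deltaz z) →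
        B = Matrix.blockDiagonal (fun _ : Fin (k + 1) => Bmat a b) →
        IsUnit ℒ ∧ ℒᵀ * B * ℒ = B ∧
          Function.Bijective ℒ.mulVec ∧
          ∀ x y : Fin 3 × Fin (k + 1) → ℂ,
            herm (B.mulVec (ℒ.mulVec x)) (ℒ.mulVec y) = herm (B.mulVec x) y := by
  refine ⟨transpose_deltaz_mul_Bmat_mul_deltaz a b z, fun k _ ℒ B hℒ hB => ?_⟩
  exact deltaz_unitary_general (fun _ => a) (fun _ => b) (fun _ => z) hℒ hB
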